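/- For every natural number k, the connected set polynomial of the disjoint union of K_3 with k copies of K_2 equals C(K_3 ∪ kK_2; x) = x³ + (3 + k)x² + (3 + 2k)x = x(x² + (3+k)x + (3+2k)), and for every k ≥ 3 this polynomial has all real roots (every complex root of it is real). -/

import Mathlib

open scoped Classical

/-- The number of connected sets (nonempty vertex subsets inducing a connected
subgraph) of order `k` in the finite simple graph `G`. -/
noncomputable def connCount {V : Type*} [Fintype V] (G : SimpleGraph V) (k : ℕ) : ℕ :=
  (Finset.univ.filter fun S : Finset V =>
    S.card = k ∧ (G.induce (S : Set V)).Connected).card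

/-- The connected set polynomial `C(G;x) = sum_(k=1)^n c_k x^k`, at a complex argument. -/
noncomputable def connPoly {V : Type*} [Fintype V] (G : SimpleGraph V) (x : ℂ) : ℂ :=
  ∑ k ∈ Finset.Icc 1 (Fintype.card V), (connCount G k : ℂ) * x ^ k

/-- The disjoint union of K_3 (the left summand) with k copies of K_2 (the right
summand: for each i : Fin k, the pair (i,0), (i,1) forms an edge). -/
def K3UnionKK2 (k : ℕ) : SimpleGraph (Fin 3 ⊕ (Fin k × Fin 2)) :=
  SimpleGraph.fromRel fun p q =>
    (∃ u v : Fin 3, p = Sum.inl u ∧ q = Sum.inl v) ∨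
    (∃ i u v, p = Sum.inr (i, u) ∧ q = Sum.inr (i, v))

/-- The component label of a vertex. -/
def compLabel (k : ℕ) : Fin 3 ⊕ (Fin k × Fin 2) → Option (Fin k)
  | Sum.inl _ => none
  | Sum.inr p => some p.1

lemma adj_iff_compLabel (k : ℕ) (p q : Fin 3 ⊕ (Fin k × Fin 2)) :
    (K3UnionKK2 k).Adj p q ↔ p ≠ q ∧ compLabel k p = compLabel k q := by
  rcases p with p | ⟨i, p⟩ <;> rcases q with q | ⟨j, q⟩
  · simp [K3UnionKK2, SimpleGraph.fromRel_adj, compLabel]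
  · simp [K3UnionKK2, SimpleGraph.fromRel_adj, compLabel]
  · simp [K3UnionKK2, SimpleGraph.fromRel_adj, compLabel]
  · rw [K3UnionKK2, SimpleGraph.fromRel_adj]
    refine and_congr_right fun _ => ?_
    simp only [compLabel, Option.some.injEq]
    constructor
    · rintro ((⟨_, _, h, _⟩ | ⟨_, _, _, h, h'⟩) | (⟨_, _, h, _⟩ | ⟨_, _, _, h, h'⟩)) <;>
        simp_all
    · rintro rfl
      exact Or.inl (Or.inr ⟨i, p, q, rfl, rfl⟩)

lemma connected_iff_compLabel (k : ℕ) (S : Finset (Fin 3 ⊕ (Fin k × Fin 2))) :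
    ((K3UnionKK2 k).induce (S : Set _)).Connected ↔
      S.Nonempty ∧ ∃ c, ∀ p ∈ S, compLabel k p = c := by
  constructor
  · intro h
    obtain ⟨⟨v, hv⟩⟩ := h.nonempty
    refine ⟨⟨v, hv⟩, compLabel k v, fun p hp => ?_⟩
    obtain ⟨w⟩ := h.preconnected ⟨p, hp⟩ ⟨v, hv⟩
    have key : ∀ (a b : (S : Set (Fin 3 ⊕ (Fin k × Fin 2))))
        (w : ((K3UnionKK2 k).induce (S : Set _)).Walk a b),
        compLabel k a.1 = compLabel k b.1 := by
      intro a b w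
      induction w with
      | nil => rfl
      | cons h _ ih =>
        rw [SimpleGraph.induce_adj, adj_iff_compLabel] at h
        exact h.2.trans ih
    exact key _ _ w
  · rintro ⟨⟨v, hv⟩, c, hc⟩
    have : Nonempty (S : Set (Fin 3 ⊕ (Fin k × Fin 2))) := ⟨⟨v, hv⟩⟩
    refine SimpleGraph.Connected.mk ?_
    rintro ⟨a, ha⟩ ⟨b, hb⟩
    by_cases hab : a = b
    · subst hab
      exact SimpleGraph.Reachable.refl _
    · apply SimpleGraph.Adj.reachable
      rw [SimpleGraph.induce_adj, adj_iff_compLabel]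
      exact ⟨hab, (hc a ha).trans (hc b hb).symm⟩

lemma connPoly_eq_sum {V : Type*} [Fintype V] (G : SimpleGraph V) (x : ℂ) :
    connPoly G x = ∑ S ∈ Finset.univ.filter
      (fun S : Finset V => (G.induce (S : Set V)).Connected), x ^ S.card := by
  unfold connPoly connCount
  rw [← Finset.sum_fiberwise_of_maps_to (t := Finset.Icc 1 (Fintype.card V))
    (g := fun S : Finset V => S.card)]
  · refine Finset.sum_congr rfl fun j _ => ?_
    rw [Finset.filter_filter, Finset.sum_congr rfl (g := fun _ => x ^ j)]
    · rw [Finset.sum_const, nsmul_eq_mul]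
      congr 3
      ext S
      simp [and_comm]
    · intro S hS
      rw [(Finset.mem_filter.1 hS).2.2]
  · intro S hS
    obtain ⟨⟨v, hv⟩⟩ := (Finset.mem_filter.1 hS).2.nonempty
    exact Finset.mem_Icc.2 ⟨Finset.card_pos.2 ⟨v, hv⟩, Finset.card_le_univ S⟩

lemma sum_erase_empty {V : Type*} [DecidableEq (Finset V)] (F : Finset V) (x : ℂ) :
    ∑ S ∈ F.powerset.erase ∅, x ^ S.card = (x + 1) ^ F.card - 1 := by
  have h := Finset.sum_pow_mul_eq_add_pow x 1 F
  have h2 := Finset.add_sum_erase F.powerset (fun S => x ^ S.card)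
    (Finset.empty_mem_powerset F)
  simp only [one_pow, mul_one] at h
  rw [h] at h2
  simp only [Finset.card_empty, pow_zero] at h2
  rw [← h2]
  ring

lemma card_none (k : ℕ) :
    (Finset.univ.filter fun p => compLabel k p = none).card = 3 := by
  have : (Finset.univ.filter fun p => compLabel k p = none) =
      (Finset.univ : Finset (Fin 3)).map Function.Embedding.inl := by
    ext p
    rw [Finset.mem_filter]
    rcases p with p | p <;> simp [compLabel]
  rw [this, Finset.card_map]
  simp

lemma card_some (k : ℕ) (i : Fin k) :
    (Finset.univ.filter fun p => compLabel k p = some i).card = 2 := by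
  have : (Finset.univ.filter fun p => compLabel k p = some i) =
      (({i} : Finset (Fin k)) ×ˢ (Finset.univ : Finset (Fin 2))).map
        Function.Embedding.inr := by
    ext p
    rw [Finset.mem_filter]
    rcases p with p | ⟨j, p⟩
    · simp [compLabel]
    · simp only [Finset.mem_univ, true_and, compLabel, Option.some.injEq, Finset.mem_map,
        Finset.mem_product, Finset.mem_singleton, and_true, Function.Embedding.inr_apply,
        Sum.inr.injEq, exists_eq_right]
  rw [this, Finset.card_map]
  simp

lemma connPoly_formula (k : ℕ) (x : ℂ) : connPoly (K3UnionKK2 k) x =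
    x ^ 3 + (3 + (k : ℂ)) * x ^ 2 + (3 + 2 * (k : ℂ)) * x := by
  rw [connPoly_eq_sum]
  refine (Finset.sum_congr (s₂ := (Finset.univ : Finset (Option (Fin k))).biUnion fun c =>
    (Finset.univ.filter fun p => compLabel k p = c).powerset.erase ∅) ?_
    (fun _ _ => rfl)).trans ?_
  · ext S
    simp only [Finset.mem_filter, Finset.mem_univ, true_and, connected_iff_compLabel,
      Finset.mem_biUnion, Finset.mem_erase, Finset.mem_powerset, Finset.subset_iff,
      Finset.nonempty_iff_ne_empty, exists_and_left, ne_eq]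
  rw [Finset.sum_biUnion]
  · simp only [sum_erase_empty]
    rw [Fintype.sum_option]
    simp only [card_none, card_some, Finset.sum_const, Finset.card_univ, Fintype.card_fin,
      nsmul_eq_mul]
    ring
  · intro c _ d _ hcd
    refine Finset.disjoint_left.2 fun S hS hT => hcd ?_
    simp only [Finset.mem_erase, Finset.mem_powerset, Finset.subset_iff,
      Finset.mem_filter, Finset.mem_univ, true_and] at hS hT
    obtain ⟨v, hv⟩ := Finset.nonempty_iff_ne_empty.2 hS.1
    exact (hS.2 hv).symm.trans (hT.2 hv)

/-- The connected set polynomial of K_3 ∪ kK_2 equals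
x^3 + (3+k)x^2 + (3+2k)x = x(x^2 + (3+k)x + (3+2k)), and for k ≥ 3 all of its complex
roots are real. -/
theorem connPoly_K3UnionKK2 (k : ℕ) :
    (∀ x : ℂ, connPoly (K3UnionKK2 k) x =
      x ^ 3 + (3 + (k : ℂ)) * x ^ 2 + (3 + 2 * (k : ℂ)) * x ∧
      connPoly (K3UnionKK2 k) x =
        x * (x ^ 2 + (3 + (k : ℂ)) * x + (3 + 2 * (k : ℂ)))) ∧
    (3 ≤ k → ∀ z : ℂ, connPoly (K3UnionKK2 k) z = 0 → z.im = 0) := by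
  have hf := connPoly_formula k
  refine ⟨fun x => ⟨hf x, by rw [hf x]; ring⟩, fun hk z hz => ?_⟩
  rw [hf z] at hz
  have hz' : z * (z ^ 2 + (3 + (k : ℂ)) * z + (3 + 2 * (k : ℂ))) = 0 := by
    rw [← hz]; ring
  rcases mul_eq_zero.1 hz' with h | h
  · simp [h]
  · have hre := congrArg Complex.re h
    have him := congrArg Complex.im h
    simp [pow_two] at hre him
    by_contra hne
    have h1 : 2 * z.re + (3 + (k : ℝ)) = 0 := by
      apply mul_right_cancel₀ hne
      linarith
    have hk' : (3 : ℝ) ≤ k := by exact_mod_cast hk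
    have hpos : 0 < z.im * z.im := mul_self_pos.2 hne
    have h2 : (k : ℝ) = -3 - 2 * z.re := by linarith
    have h3 : z.re = -(3 + (k : ℝ)) / 2 := by linarith
    rw [h3] at hre
    nlinarith [mul_nonneg (sub_nonneg.2 hk') (by linarith : (0 : ℝ) ≤ k + 1)]
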